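/- Let 0 < α < 1 and z ≥ max{α, 1 − α}, and let ρ, σ be n×n positive semidefinite complex matrices. Then Q_{α,z}(ρ‖σ) = ⨅_{ε > 0} Q_{α,z}(ρ + ε σ ‖ σ + ε ρ), and moreover Q_{α,z}(ρ + ε σ ‖ σ + ε ρ) converges to Q_{α,z}(ρ‖σ) as ε ↓ 0. -/

import Mathlib

open Matrix
open scoped ComplexOrder

/-- Real power of a positive semidefinite matrix via the spectral decomposition,
applying `x ^ t` (real `rpow`, so with the convention `0 ^ t = 0` for `t ≠ 0`)
to the eigenvalues; returns `0` if the matrix is not Hermitian. -/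
noncomputable def mpow {n : Type*} [Fintype n] [DecidableEq n]
    (A : Matrix n n ℂ) (t : ℝ) : Matrix n n ℂ :=
  if hA : A.IsHermitian then
    (hA.eigenvectorUnitary : Matrix n n ℂ) *
      Matrix.diagonal (fun i => ((hA.eigenvalues i ^ t : ℝ) : ℂ)) *
      star (hA.eigenvectorUnitary : Matrix n n ℂ)
  else 0


/-- The α-z-Rényi quantity `Q_{α,z}(ρ‖σ) = Tr((σ^((1−α)/2z) ρ^(α/z) σ^((1−α)/2z))^z)`. -/
noncomputable def Qaz {n : Type*} [Fintype n] [DecidableEq n]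
    (α z : ℝ) (ρ σ : Matrix n n ℂ) : ℝ :=
  ((mpow (mpow σ ((1 - α) / (2 * z)) * mpow ρ (α / z) * mpow σ ((1 - α) / (2 * z))) z).trace).re

section Aux
set_option linter.unusedSectionVars false
open scoped MatrixOrder Matrix.Norms.L2Operator NNReal

variable {m : Type*} [Fintype m] [DecidableEq m]

lemma mpow_eq_rpow {A : Matrix m m ℂ} (hA : A.PosSemidef) (t : ℝ) :
    mpow A t = A ^ t := by
  rw [CFC.rpow_eq_cfc_real hA.nonneg, hA.1.cfc_eq, Matrix.IsHermitian.cfc, mpow, dif_pos hA.1,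
    Unitary.conjStarAlgAut_apply]
  rfl

lemma mpow_posSemidef {A : Matrix m m ℂ} (hA : A.PosSemidef) (t : ℝ) :
    (mpow A t).PosSemidef := by
  rw [mpow_eq_rpow hA, ← Matrix.nonneg_iff_posSemidef]
  exact CFC.rpow_nonneg

lemma mpow_mono {A B : Matrix m m ℂ} (hA : A.PosSemidef) (hAB : A ≤ B) {t : ℝ}
    (h0 : 0 ≤ t) (h1 : t ≤ 1) : mpow A t ≤ mpow B t := by
  have hB : B.PosSemidef := Matrix.nonneg_iff_posSemidef.1 (hA.nonneg.trans hAB)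
  rw [mpow_eq_rpow hA, mpow_eq_rpow hB]
  exact CFC.rpow_le_rpow ⟨h0, h1⟩ hAB

lemma mpow_tendsto {X : Type*} {l : Filter X} {F : X → Matrix m m ℂ} {A : Matrix m m ℂ}
    {t : ℝ} (ht : 0 < t) (hF : ∀ᶠ x in l, (F x).PosSemidef) (hA : A.PosSemidef)
    (h : Filter.Tendsto F l (nhds A)) :
    Filter.Tendsto (fun x => mpow (F x) t) l (nhds (mpow A t)) := by
  obtain ⟨q, rfl⟩ : ∃ q : ℝ≥0, (q : ℝ) = t := ⟨⟨t, ht.le⟩, rfl⟩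
  have hp : 0 < q := by exact_mod_cast ht
  have hc := CFC.continuousOn_nnrpow (A := Matrix m m ℂ) q
  have h2 : Filter.Tendsto (fun x => (F x) ^ q) l (nhds (A ^ q)) := by
    refine Filter.Tendsto.comp (hc A hA.nonneg) ?_
    exact tendsto_nhdsWithin_iff.2 ⟨h, hF.mono fun x hx => hx.nonneg⟩
  rw [mpow_eq_rpow hA]
  rw [CFC.nnrpow_eq_rpow hp] at h2
  refine h2.congr' (hF.mono fun x hx => ?_)
  beta_reduce
  rw [mpow_eq_rpow hx, CFC.nnrpow_eq_rpow hp]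

lemma mpow_half_mul {A : Matrix m m ℂ} (hA : A.PosSemidef) {t : ℝ} (ht : 0 < t) :
    mpow A t * mpow A t = mpow A (2 * t) := by
  have hU : star (hA.1.eigenvectorUnitary : Matrix m m ℂ) * hA.1.eigenvectorUnitary = 1 :=
    Unitary.coe_star_mul_self _
  simp only [mpow, dif_pos hA.1]
  set U := (hA.1.eigenvectorUnitary : Matrix m m ℂ)
  set D := Matrix.diagonal (fun i => ((hA.1.eigenvalues i ^ t : ℝ) : ℂ)) with hD
  have : U * D * star U * (U * D * star U) = U * (D * D) * star U := by
    calc _ = U * D * (star U * U) * D * star U := by simp only [Matrix.mul_assoc]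
      _ = _ := by rw [hU, Matrix.mul_one, Matrix.mul_assoc U D D]
  rw [this, hD, Matrix.diagonal_mul_diagonal]
  congr 3
  ext i
  rw [← Complex.ofReal_mul, ← Real.rpow_add_of_nonneg (hA.eigenvalues_nonneg i) ht.le ht.le,
    two_mul]

lemma trace_mpow {A : Matrix m m ℂ} (hA : A.IsHermitian) (t : ℝ) :
    (mpow A t).trace.re = ∑ i, hA.eigenvalues i ^ t := by
  rw [mpow, dif_pos hA, Matrix.trace_mul_cycle, Unitary.coe_star_mul_self, Matrix.one_mul,
    Matrix.trace_diagonal, ← Complex.ofReal_sum, Complex.ofReal_re]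

lemma trace_mpow_roots {A : Matrix m m ℂ} (hA : A.IsHermitian) (t : ℝ) :
    (mpow A t).trace.re = (A.charpoly.roots.map (fun x : ℂ => x.re ^ t)).sum := by
  rw [trace_mpow hA, hA.roots_charpoly_eq_eigenvalues, Multiset.map_map]
  rfl

lemma trace_mpow_comm (X : Matrix m m ℂ) (t : ℝ) :
    (mpow (X * Xᴴ) t).trace.re = (mpow (Xᴴ * X) t).trace.re := by
  rw [trace_mpow_roots (Matrix.isHermitian_mul_conjTranspose_self X),
    trace_mpow_roots (Matrix.isHermitian_conjTranspose_mul_self X), Matrix.charpoly_mul_comm]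

lemma diag_conj {B : Matrix m m ℂ} (hB : B.IsHermitian) (U : Matrix m m ℂ) (t : ℝ) (i : m) :
    (star U * mpow B t * U) i i =
      ((∑ j, Complex.normSq ((star U * (hB.eigenvectorUnitary : Matrix m m ℂ)) i j)
        * hB.eigenvalues j ^ t : ℝ) : ℂ) := by
  rw [mpow, dif_pos hB]
  set V := (hB.eigenvectorUnitary : Matrix m m ℂ)
  set D := Matrix.diagonal (fun i => ((hB.eigenvalues i ^ t : ℝ) : ℂ)) with hD
  have : star U * (V * D * star V) * U = (star U * V) * D * star (star U * V) := by
    rw [star_mul, star_star]; simp only [Matrix.mul_assoc]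
  rw [this]
  set W := star U * V
  rw [Matrix.mul_apply, Complex.ofReal_sum]
  refine Finset.sum_congr rfl fun j _ => ?_
  rw [hD, Matrix.mul_diagonal, Matrix.star_apply, Complex.ofReal_mul, Complex.normSq_eq_conj_mul_self]
  simp only [RCLike.star_def]
  ring

lemma mpow_one {B : Matrix m m ℂ} (hB : B.IsHermitian) : mpow B 1 = B := by
  rw [mpow, dif_pos hB]
  conv_rhs => rw [hB.spectral_theorem, Unitary.conjStarAlgAut_apply]
  simp only [Real.rpow_one]
  rfl

lemma trace_re_mono {A B : Matrix m m ℂ} (h : A ≤ B) : A.trace.re ≤ B.trace.re := by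
  have := (Matrix.le_iff.1 h).trace_nonneg
  rw [Matrix.trace_sub] at this
  have := (Complex.le_def.1 this).1
  simpa using this

lemma trace_mpow_mono {A B : Matrix m m ℂ} (hA : A.PosSemidef) (hAB : A ≤ B) {t : ℝ}
    (ht : 0 ≤ t) : (mpow A t).trace.re ≤ (mpow B t).trace.re := by
  rcases le_total t 1 with h1 | h1
  · exact trace_re_mono (mpow_mono hA hAB ht h1)
  have hB : B.PosSemidef := Matrix.nonneg_iff_posSemidef.1 (hA.nonneg.trans hAB)
  set U := (hA.1.eigenvectorUnitary : Matrix m m ℂ) with hUdef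
  have hUU : U * star U = 1 := Unitary.coe_mul_star_self _
  have hUU' : star U * U = 1 := Unitary.coe_star_mul_self _
  set V := (hB.1.eigenvectorUnitary : Matrix m m ℂ) with hVdef
  have hVV : V * star V = 1 := Unitary.coe_mul_star_self _
  set W := star U * V with hW
  have hWW : W * star W = 1 := by
    rw [hW, star_mul, star_star]
    calc star U * V * (star V * U) = star U * (V * star V) * U := by
          simp only [Matrix.mul_assoc]
      _ = 1 := by rw [hVV, Matrix.mul_one, hUU']
  have hsum : ∀ i, ∑ j, Complex.normSq (W i j) = 1 := by
    intro i
    have h := congrFun (congrFun hWW i) i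
    rw [Matrix.mul_apply, Matrix.one_apply_eq] at h
    have h2 : ((∑ j, Complex.normSq (W i j) : ℝ) : ℂ) = 1 := by
      rw [← h, Complex.ofReal_sum]
      refine Finset.sum_congr rfl fun j _ => ?_
      rw [Matrix.star_apply, Complex.normSq_eq_conj_mul_self, mul_comm]; rfl
    exact_mod_cast h2
  have hT : (mpow B t).trace.re = ∑ i, ∑ j, Complex.normSq (W i j) * hB.1.eigenvalues j ^ t := by
    have : (mpow B t).trace = (star U * mpow B t * U).trace := by
      rw [Matrix.trace_mul_cycle, hUU, Matrix.one_mul]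
    rw [this, Matrix.trace]
    simp only [Matrix.diag_apply, diag_conj hB.1]
    rw [← Complex.ofReal_sum, Complex.ofReal_re]
  rw [trace_mpow hA.1, hT]
  refine Finset.sum_le_sum fun i _ => ?_
  have hle : hA.1.eigenvalues i ≤ ∑ j, Complex.normSq (W i j) * hB.1.eigenvalues j := by
    have h1 := diag_conj hB.1 U 1 i
    rw [mpow_one hB.1] at h1
    have h2 : (star U * A * U) i i = ((hA.1.eigenvalues i : ℝ) : ℂ) := by
      have h := diag_conj hA.1 U 1 i
      rw [mpow_one hA.1, ← hUdef, hUU'] at h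
      rw [h]
      congr 1
      rw [Finset.sum_eq_single i]
      · simp
      · intro j _ hj; simp [Matrix.one_apply_ne hj.symm]
      · simp
    have h3 : 0 ≤ (star U * (B - A) * U) i i :=
      ((Matrix.le_iff.1 hAB).conjTranspose_mul_mul_same U).diag_nonneg
    rw [Matrix.mul_sub, Matrix.sub_mul, Matrix.sub_apply, h1, h2, ← Complex.ofReal_sub] at h3
    have h4 := Complex.zero_le_real.1 h3
    simp only [Real.rpow_one] at h4
    linarith
  calc _ ≤ (∑ j, Complex.normSq (W i j) * hB.1.eigenvalues j) ^ t :=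
        Real.rpow_le_rpow (hA.eigenvalues_nonneg i) hle ht
    _ ≤ _ := Real.rpow_arith_mean_le_arith_mean_rpow _ _ _
        (fun j _ => Complex.normSq_nonneg _) (hsum i) (fun j _ => hB.eigenvalues_nonneg j) h1

lemma inner_eq {ρ σ : Matrix m m ℂ} (hρ : ρ.PosSemidef) (hσ : σ.PosSemidef) {s r : ℝ}
    (hr : 0 < r) :
    mpow σ s * mpow ρ (2 * r) * mpow σ s = (mpow σ s * mpow ρ r) * (mpow σ s * mpow ρ r)ᴴ := by
  rw [Matrix.conjTranspose_mul, (mpow_posSemidef hρ r).1.eq, (mpow_posSemidef hσ s).1.eq,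
    ← mpow_half_mul hρ hr]
  simp only [Matrix.mul_assoc]

lemma inner_eq' {ρ σ : Matrix m m ℂ} (hρ : ρ.PosSemidef) (hσ : σ.PosSemidef) {s r : ℝ}
    (hs : 0 < s) :
    mpow ρ r * mpow σ (2 * s) * mpow ρ r = (mpow σ s * mpow ρ r)ᴴ * (mpow σ s * mpow ρ r) := by
  rw [Matrix.conjTranspose_mul, (mpow_posSemidef hρ r).1.eq, (mpow_posSemidef hσ s).1.eq,
    ← mpow_half_mul hσ hs]
  simp only [Matrix.mul_assoc]

lemma conj_mono {A B C : Matrix m m ℂ} (hC : C.PosSemidef) (h : A ≤ B) :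
    C * A * C ≤ C * B * C := by
  have := (Matrix.le_iff.1 h).conjTranspose_mul_mul_same C
  rw [hC.1.eq, Matrix.mul_sub, Matrix.sub_mul] at this
  exact Matrix.le_iff.2 this

lemma conj_psd {A C : Matrix m m ℂ} (hC : C.PosSemidef) (h : A.PosSemidef) :
    (C * A * C).PosSemidef := by
  have := h.conjTranspose_mul_mul_same C
  rwa [hC.1.eq] at this

lemma Qaz_mono {α z : ℝ} (hα0 : 0 < α) (hα1 : α < 1) (hz : max α (1 - α) ≤ z)
    {ρ σ ρ' σ' : Matrix m m ℂ} (hρ : ρ.PosSemidef) (hσ : σ.PosSemidef)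
    (h1 : ρ ≤ ρ') (h2 : σ ≤ σ') : Qaz α z ρ σ ≤ Qaz α z ρ' σ' := by
  have hρ' : ρ'.PosSemidef := Matrix.nonneg_iff_posSemidef.1 (hρ.nonneg.trans h1)
  have hσ' : σ'.PosSemidef := Matrix.nonneg_iff_posSemidef.1 (hσ.nonneg.trans h2)
  have hza := (le_max_left _ _).trans hz
  have hzb := (le_max_right _ _).trans hz
  have hz0 : 0 < z := hα0.trans_le hza
  have hb : 0 < 1 - α := by linarith
  have hr : 0 < α / (2 * z) := by positivity
  have hs : 0 < (1 - α) / (2 * z) := by positivity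
  have er : α / z = 2 * (α / (2 * z)) := by field_simp
  have hr1 : 2 * (α / (2 * z)) ≤ 1 := by rw [← er]; exact (div_le_one hz0).2 hza
  have hs1 : 2 * ((1 - α) / (2 * z)) ≤ 1 := by
    have : (1 - α) / z = 2 * ((1 - α) / (2 * z)) := by field_simp
    rw [← this]; exact (div_le_one hz0).2 hzb
  unfold Qaz
  rw [er]
  set r := α / (2 * z)
  set s := (1 - α) / (2 * z)
  calc _ ≤ (mpow (mpow σ s * mpow ρ' (2 * r) * mpow σ s) z).trace.re :=
        trace_mpow_mono (conj_psd (mpow_posSemidef hσ _) (mpow_posSemidef hρ _))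
          (conj_mono (mpow_posSemidef hσ _) (mpow_mono hρ h1 (by positivity) hr1)) hz0.le
    _ = (mpow (mpow ρ' r * mpow σ (2 * s) * mpow ρ' r) z).trace.re := by
        rw [inner_eq hρ' hσ hr, inner_eq' hρ' hσ hs, trace_mpow_comm]
    _ ≤ (mpow (mpow ρ' r * mpow σ' (2 * s) * mpow ρ' r) z).trace.re :=
        trace_mpow_mono (conj_psd (mpow_posSemidef hρ' _) (mpow_posSemidef hσ _))
          (conj_mono (mpow_posSemidef hρ' _) (mpow_mono hσ h2 (by positivity) hs1)) hz0.le
    _ = _ := by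
        rw [inner_eq hρ' hσ' hr, inner_eq' hρ' hσ' hs, trace_mpow_comm]

lemma perturb_psd {ρ σ : Matrix m m ℂ} (hρ : ρ.PosSemidef) (hσ : σ.PosSemidef) {ε : ℝ}
    (hε : 0 ≤ ε) : (ρ + ε • σ).PosSemidef := hρ.add (hσ.smul hε)

lemma perturb_le (ρ : Matrix m m ℂ) {σ : Matrix m m ℂ} (hσ : σ.PosSemidef) {ε : ℝ}
    (hε : 0 ≤ ε) : ρ ≤ ρ + ε • σ := by
  rw [Matrix.le_iff, add_sub_cancel_left]
  exact hσ.smul hε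

lemma perturb_tendsto (ρ σ : Matrix m m ℂ) :
    Filter.Tendsto (fun ε : ℝ => ρ + ε • σ) (nhdsWithin 0 (Set.Ioi 0)) (nhds ρ) := by
  have : Continuous (fun ε : ℝ => ρ + ε • σ) := by fun_prop
  have h := this.tendsto 0
  simp only [zero_smul, add_zero] at h
  exact h.mono_left nhdsWithin_le_nhds

lemma Qaz_tendsto {α z : ℝ} (hα0 : 0 < α) (hα1 : α < 1) (hz : 0 < z)
    {ρ σ : Matrix m m ℂ} (hρ : ρ.PosSemidef) (hσ : σ.PosSemidef) :
    Filter.Tendsto (fun ε : ℝ => Qaz α z (ρ + ε • σ) (σ + ε • ρ))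
      (nhdsWithin 0 (Set.Ioi 0)) (nhds (Qaz α z ρ σ)) := by
  have hb : 0 < 1 - α := by linarith
  have hr : 0 < α / z := by positivity
  have hs : 0 < (1 - α) / (2 * z) := by positivity
  have e0 : ∀ᶠ ε : ℝ in nhdsWithin 0 (Set.Ioi 0), 0 < ε := self_mem_nhdsWithin
  have e1 := e0.mono fun ε hε => perturb_psd hρ hσ hε.le
  have e2 := e0.mono fun ε hε => perturb_psd hσ hρ hε.le
  have t1 := mpow_tendsto hr e1 hρ (perturb_tendsto ρ σ)
  have t2 := mpow_tendsto hs e2 hσ (perturb_tendsto σ ρ)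
  have t3 := mpow_tendsto hz
    ((e1.and e2).mono fun ε h => conj_psd (mpow_posSemidef h.2 _) (mpow_posSemidef h.1 _))
    (conj_psd (mpow_posSemidef hσ _) (mpow_posSemidef hρ _)) ((t2.mul t1).mul t2)
  have hc : Continuous (fun M : Matrix m m ℂ => M.trace.re) :=
    Complex.continuous_re.comp continuous_id.matrix_trace
  exact (hc.tendsto _).comp t3

end Aux

/-- For `0 < α < 1` and `z ≥ max{α, 1−α}`:
`Q_{α,z}(ρ‖σ) = ⨅_{ε>0} Q_{α,z}(ρ + εσ‖σ + ερ)`, and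
`Q_{α,z}(ρ + εσ‖σ + ερ) → Q_{α,z}(ρ‖σ)` as `ε ↓ 0`. -/
theorem Qaz_eq_iInf_perturb (n : ℕ) (α z : ℝ) (hα0 : 0 < α) (hα1 : α < 1)
    (hz : max α (1 - α) ≤ z)
    (ρ σ : Matrix (Fin n) (Fin n) ℂ) (hρ : ρ.PosSemidef) (hσ : σ.PosSemidef) :
    Qaz α z ρ σ = ⨅ ε : {x : ℝ // 0 < x}, Qaz α z (ρ + (ε : ℝ) • σ) (σ + (ε : ℝ) • ρ) ∧
    Filter.Tendsto (fun ε : ℝ => Qaz α z (ρ + ε • σ) (σ + ε • ρ))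
      (nhdsWithin 0 (Set.Ioi 0)) (nhds (Qaz α z ρ σ)) := by
  have hz0 : 0 < z := hα0.trans_le ((le_max_left _ _).trans hz)
  have ht := Qaz_tendsto hα0 hα1 hz0 hρ hσ
  have hm : ∀ ε : {x : ℝ // 0 < x},
      Qaz α z ρ σ ≤ Qaz α z (ρ + (ε : ℝ) • σ) (σ + (ε : ℝ) • ρ) := fun ε =>
    Qaz_mono hα0 hα1 hz hρ hσ (perturb_le ρ hσ ε.2.le) (perturb_le σ hρ ε.2.le)
  refine ⟨le_antisymm ?_ ?_, ht⟩
  · have : Nonempty {x : ℝ // 0 < x} := ⟨⟨1, one_pos⟩⟩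
    exact le_ciInf hm
  · refine ge_of_tendsto ht ?_
    filter_upwards [self_mem_nhdsWithin] with ε hε
    exact ciInf_le (f := fun ε : {x : ℝ // 0 < x} =>
      Qaz α z (ρ + (ε : ℝ) • σ) (σ + (ε : ℝ) • ρ))
      ⟨Qaz α z ρ σ, by rintro _ ⟨e, rfl⟩; exact hm e⟩ ⟨ε, hε⟩
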